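/- (Planchon's Poincaré-type inequality) Let $f \in \mathcal{S}(\mathbb{R}^d)$ whose Fourier transform is supported outside the unit ball $\{|\xi| \ge 1\}$. Then for every $p \ge 2$ there is a constant $C_p > 0$ such that $\int |f|^p\, dx \le C_p \int |\nabla f|^2 |f|^{p-2}\, dx$. -/

import Mathlib

open MeasureTheory FourierTransform SchwartzMap

noncomputable section

set_option linter.unusedSectionVars false

/-!
Write `q = p - 2`, `F = |f|^q conj f`, `P = ∫ |f|^p` and `G = ∫ |∇f|² |f|^q`.

The spectral gap enters through a single fixed Schwartz function `φ`, the Fourier transform of a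
bump function supported in the open unit ball with value `1` at the origin (`exists_kernel`). It
satisfies `∫ φ = 1`, while self-adjointness of the Fourier transform gives `∫ φ(y) f(x + y) dy = 0`
for every `x` as soon as `𝓕 f` vanishes on the open unit ball. Pairing this with `F`, for which
`F f = |f|^p`, and translating the inner integral gives (`integral_rpow_eq`)
`P = ∫ φ(y) ∫ (F(x) - F(x - y)) f(x) dx dy`.

Since `|∇F| ≤ (q + 1) |∇f| |f|^q`, the difference `F(x) - F(x - y)` is at most
`(q + 1) |y|` times the average of `|∇f| |f|^q` over the segment from `x - y` to `x`
(`norm_conjPow_sub_le`). By Young's inequality and the translation invariance of Lebesgue measure,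
the inner integral is at most `(q + 1) |y| (K G + P / (2K))` for every `K > 0`
(`norm_integral_translate_le`). Integrating against `|φ|` and choosing `K` larger than
`(q + 1) ∫ |y| |φ(y)| dy`, the term in `P` on the right is absorbed by the left-hand side.
-/

/-! ### The nonlinearity `|z|^q conj z` -/

/-- The function `z ↦ |z|^q conj z`, dual to `z` in the sense that its product with `z` is
`|z|^(q+2)`. -/
def conjPow (q : ℝ) (z : ℂ) : ℂ := ((‖z‖ ^ q : ℝ) : ℂ) * (starRingEnd ℂ) z

lemma continuous_conjPow {q : ℝ} (hq : 0 ≤ q) : Continuous (conjPow q) := by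
  unfold conjPow
  refine (Complex.continuous_ofReal.comp ?_).mul Complex.continuous_conj
  exact continuous_norm.rpow_const fun _ => Or.inr hq

lemma norm_conjPow {q : ℝ} (hq : 0 ≤ q) (z : ℂ) : ‖conjPow q z‖ = ‖z‖ ^ (q + 1) := by
  rw [conjPow, norm_mul, RCLike.norm_conj, Complex.norm_real, Real.norm_of_nonneg (by positivity),
    Real.rpow_add_one' (norm_nonneg z) (by linarith)]

lemma conjPow_mul_self {q : ℝ} (hq : 0 ≤ q) (z : ℂ) :
    conjPow q z * z = ((‖z‖ ^ (q + 2) : ℝ) : ℂ) := by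
  rw [conjPow, mul_assoc, mul_comm _ z, Complex.mul_conj, Complex.normSq_eq_norm_sq,
    ← Complex.ofReal_mul, ← Real.rpow_natCast, ← Real.rpow_add' (norm_nonneg z) (by positivity)]
  norm_num

/-- Chain rule bound for `conjPow q` along a curve. At a zero of the curve `|·|^q` need not be
differentiable, but the other factor vanishes there, so continuity of `|·|^q` suffices. -/
lemma exists_hasDerivAt_conjPow {q : ℝ} (hq : 0 ≤ q) {c : ℝ → ℂ} {c' : ℂ} {t : ℝ}
    (hc : HasDerivAt c c' t) :
    ∃ D, HasDerivAt (fun s => conjPow q (c s)) D t ∧ ‖D‖ ≤ (q + 1) * ‖c t‖ ^ q * ‖c'‖ := by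
  have hconj : HasDerivAt (fun s => (starRingEnd ℂ) (c s)) ((starRingEnd ℂ) c') t := hc.star
  by_cases h0 : c t = 0
  · refine ⟨((‖c t‖ ^ q : ℝ) : ℂ) * (starRingEnd ℂ) c', ?_, ?_⟩
    · rw [hasDerivAt_iff_tendsto_slope] at hconj ⊢
      have hcont : ContinuousAt (fun s => ((‖c s‖ ^ q : ℝ) : ℂ)) t :=
        Complex.continuous_ofReal.continuousAt.comp
          (hc.continuousAt.norm.rpow_const (Or.inr hq))
      refine ((hcont.tendsto.mono_left nhdsWithin_le_nhds).mul hconj).congr fun s => ?_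
      simp only [slope_def_module, conjPow, h0, map_zero, sub_zero, mul_zero, mul_smul_comm]
    · rw [norm_mul, RCLike.norm_conj, Complex.norm_real, Real.norm_of_nonneg (by positivity)]
      have : 0 ≤ ‖c t‖ ^ q * ‖c'‖ := by positivity
      nlinarith
  · have hpos : 0 < ‖c t‖ := norm_pos_iff.2 h0
    obtain ⟨n', hn, hn'⟩ : ∃ n', HasDerivAt (fun s => ‖c s‖) n' t ∧ ‖n'‖ ≤ ‖c'‖ := by
      have hd : DifferentiableAt ℝ (fun z : ℂ => ‖z‖) (c t) :=
        differentiableAt_id.norm ℝ h0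
      refine ⟨_, hd.hasFDerivAt.comp_hasDerivAt t hc, ?_⟩
      refine (ContinuousLinearMap.le_opNorm _ _).trans ?_
      have := norm_fderiv_le_of_lipschitz ℝ (x₀ := c t) (lipschitzWith_one_norm (E := ℂ))
      exact mul_le_of_le_one_left (norm_nonneg _) (by simpa using this)
    have hr := (hn.rpow_const (p := q) (Or.inl hpos.ne')).ofReal_comp
    refine ⟨_, hr.mul hconj, (norm_add_le _ _).trans ?_⟩
    simp only [norm_mul, RCLike.norm_conj, Complex.norm_real]
    rw [Real.norm_of_nonneg hq, Real.norm_of_nonneg (by positivity : 0 ≤ ‖c t‖ ^ q),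
      Real.norm_of_nonneg (by positivity : 0 ≤ ‖c t‖ ^ (q - 1))]
    have e : ‖c t‖ ^ q = ‖c t‖ ^ (q - 1) * ‖c t‖ := by
      rw [← Real.rpow_add_one hpos.ne']; ring_nf
    have : 0 ≤ q * ‖c t‖ ^ (q - 1) * ‖c t‖ := by positivity
    rw [e]
    nlinarith [mul_le_mul_of_nonneg_left hn' this]

/-- Young's inequality in the form that separates the Dirichlet density `g² r^q` from terms which
are integrated to multiples of the `L^p` norm. -/
lemma young {q K a g r : ℝ} (hq : 0 ≤ q) (hK : 0 < K) (ha : 0 ≤ a) (hr : 0 ≤ r) :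
    a * (g * r ^ q) ≤ K * (g ^ 2 * r ^ q) + (4 * K)⁻¹ * (r ^ (q + 2) + a ^ (q + 2)) := by
  have h1 : r ^ q * a ^ 2 ≤ r ^ (q + 2) + a ^ (q + 2) := by
    have e : ∀ m : ℝ, 0 ≤ m → m ^ q * m ^ 2 = m ^ (q + 2) := fun m hm => by
      rw [← Real.rpow_natCast, ← Real.rpow_add' hm (by positivity)]; norm_num
    rcases le_total a r with h | h
    · have : r ^ q * a ^ 2 ≤ r ^ q * r ^ 2 := by gcongr
      rw [e r hr] at this
      have : 0 ≤ a ^ (q + 2) := by positivity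
      linarith
    · have : r ^ q * a ^ 2 ≤ a ^ q * a ^ 2 := by gcongr
      rw [e a ha] at this
      have : 0 ≤ r ^ (q + 2) := by positivity
      linarith
  have h2 : a * g ≤ K * g ^ 2 + (4 * K)⁻¹ * a ^ 2 := by
    have h3 : K * g ^ 2 + (4 * K)⁻¹ * a ^ 2 - a * g = K * (g - a / (2 * K)) ^ 2 := by
      field_simp; ring
    have h4 : 0 ≤ K * (g - a / (2 * K)) ^ 2 := by positivity
    linarith
  have h5 := mul_le_mul_of_nonneg_right h2 (by positivity : 0 ≤ r ^ q)
  have h6 := mul_le_mul_of_nonneg_left h1 (by positivity : 0 ≤ (4 * K)⁻¹)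
  nlinarith

section
variable {V : Type*} [NormedAddCommGroup V] [InnerProductSpace ℝ V] [FiniteDimensional ℝ V]
  [MeasurableSpace V] [BorelSpace V]

/-! ### Averages over translates -/

lemma integrable_comp_sub_smul {h : V → ℝ} (hc : Continuous h) (hi : Integrable h) (y : V) :
    Integrable (fun z : V × ℝ => h (z.1 - z.2 • y))
      (volume.prod (volume.restrict (Set.Ioc (0 : ℝ) 1))) := by
  rw [integrable_prod_iff' (Continuous.aestronglyMeasurable (by fun_prop))]
  refine ⟨.of_forall fun t => hi.comp_sub_right (t • y), ?_⟩
  simp only [integral_sub_right_eq_self (fun x => ‖h x‖)]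
  exact integrable_const _

/-- Averaging a function over the translates along a segment does not change its integral. -/
lemma integral_comp_sub_smul {h : V → ℝ} (hc : Continuous h) (hi : Integrable h) (y : V) :
    ∫ x, ∫ t in (0 : ℝ)..1, h (x - t • y) = ∫ x, h x := by
  simp only [intervalIntegral.integral_of_le zero_le_one]
  rw [integral_integral_swap (integrable_comp_sub_smul hc hi y)]
  simp only [integral_sub_right_eq_self]
  simp

/-! ### The kernel encoding the spectral gap -/

/-- A Schwartz function of integral `1` that annihilates, by correlation, every Schwartz function
whose Fourier transform vanishes on the open unit ball. -/
lemma exists_kernel : ∃ φ : 𝓢(V, ℂ), ∫ y, φ y = 1 ∧ ∀ f : 𝓢(V, ℂ),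
    Function.support (𝓕 (f : V → ℂ)) ⊆ {ξ | 1 ≤ ‖ξ‖} → ∀ x, ∫ y, φ y * f (x + y) = 0 := by
  obtain ⟨χ, hs, hcs, hsm, -, h1⟩ := exists_contDiff_tsupport_subset (n := ⊤)
    (Metric.ball_mem_nhds (0 : V) one_pos)
  have hcs' : HasCompactSupport (fun x => (χ x : ℂ)) := hcs.comp_left Complex.ofReal_zero
  let ψ : 𝓢(V, ℂ) := hcs'.toSchwartzMap (Complex.ofRealCLM.contDiff.comp hsm)
  have hψ : ∀ x, ψ x = χ x := fun x => rfl
  refine ⟨𝓕 ψ, ?_, fun f hf x => ?_⟩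
  -- Fourier inversion at the origin: `∫ 𝓕 ψ = ψ 0 = 1`.
  · have h : (𝓕⁻ (𝓕 ψ)) 0 = ψ 0 := by rw [FourierTransform.fourierInv_fourier_eq]
    rw [SchwartzMap.fourierInv_coe, Real.fourierInv_eq] at h
    simpa [hψ, h1] using h
  -- Moving the Fourier transform onto the translate of `f` leaves a product of functions with
  -- disjoint supports.
  · have h := integral_fourier_mul_eq ψ (f.compSubConstCLM ℂ (-x))
    have hg : ∀ y, f.compSubConstCLM ℂ (-x) y = f (x + y) := fun y => by
      rw [compSubConstCLM_apply, sub_neg_eq_add, add_comm]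
    simp only [hg] at h
    rw [h, ← integral_zero V ℂ]
    congr 1 with ξ
    by_cases hξ : ‖ξ‖ < 1
    · have h0 : 𝓕 (f : V → ℂ) ξ = 0 := by
        by_contra hne
        exact absurd (hf hne) (not_le.2 hξ)
      have e : (f.compSubConstCLM ℂ (-x) : V → ℂ) = (f : V → ℂ) ∘ fun v => v + x := by
        ext y; simp [hg, add_comm]
      have := congrFun (VectorFourier.fourierIntegral_comp_add_right Real.fourierChar volume
        (innerₗ V) (f : V → ℂ) x) ξ
      rw [SchwartzMap.fourier_coe, e]
      have h2 : 𝓕 ((f : V → ℂ) ∘ fun v => v + x) ξ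
        = Real.fourierChar (inner ℝ x ξ) • 𝓕 (f : V → ℂ) ξ := this
      rw [h2, h0, smul_zero, mul_zero]
    · have : χ ξ = 0 := by
        by_contra hne
        exact hξ (by simpa using hs (subset_tsupport χ hne))
      simp [hψ, this]


/-! ### Integrability -/

lemma integrable_norm_rpow (f : 𝓢(V, ℂ)) {r : ℝ} (hr : 1 ≤ r) :
    Integrable (fun x => ‖f x‖ ^ r) := by
  have h := (f.memLp (ENNReal.ofReal r) volume).integrable_norm_rpow
    (by simpa using by linarith) ENNReal.ofReal_ne_top
  rwa [ENNReal.toReal_ofReal (by linarith)] at h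

lemma integrable_dirichlet (f : 𝓢(V, ℂ)) {q : ℝ} (hq : 0 ≤ q) :
    Integrable (fun x => ‖fderiv ℝ (f : V → ℂ) x‖ ^ 2 * ‖f x‖ ^ q) := by
  have h : Integrable (fun x => ‖fderiv ℝ (f : V → ℂ) x‖ ^ 2) :=
    ((fderivCLM ℝ V ℂ f).memLp 2 volume).integrable_norm_pow (by norm_num)
  obtain ⟨C, hC⟩ : ∃ C, ∀ x, ‖f x‖ ≤ C :=
    ⟨_, fun x => f.toBoundedContinuousFunction.norm_coe_le_norm x⟩
  refine h.mul_bdd (c := C ^ q) ?_ (.of_forall fun x => ?_)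
  · exact (f.continuous.norm.rpow_const fun _ => Or.inr hq).aestronglyMeasurable
  · rw [Real.norm_of_nonneg (by positivity)]
    exact Real.rpow_le_rpow (norm_nonneg _) (hC x) hq

/-! ### Estimates for differences of translates -/

/-- Mean value bound along the segment from `x` to `x - y`, keeping the gradient inside the integral. -/
lemma norm_conjPow_sub_le (f : 𝓢(V, ℂ)) {q : ℝ} (hq : 0 ≤ q) (x y : V) :
    ‖conjPow q (f x) - conjPow q (f (x - y))‖ ≤
      ∫ t in (0 : ℝ)..1, (q + 1) * ‖y‖ *
        (‖fderiv ℝ (f : V → ℂ) (x - t • y)‖ * ‖f (x - t • y)‖ ^ q) := by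
  have hcurve : ∀ t : ℝ, HasDerivAt (fun s : ℝ => f (x - s • y))
      (fderiv ℝ (f : V → ℂ) (x - t • y) (-y)) t := fun t => by
    have hl : HasDerivAt (fun s : ℝ => x - s • y) (-y) t := by
      simpa using ((hasDerivAt_id t).smul_const y).const_sub x
    exact ((f.differentiableAt (x := x - t • y)).hasFDerivAt).comp_hasDerivAt t hl
  choose D hD hDle using fun t => exists_hasDerivAt_conjPow hq (hcurve t)
  have h := norm_sub_le_integral_of_norm_deriv_le_of_le
    (f := fun s : ℝ => conjPow q (f (x - s • y))) (a := 0) (b := 1)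
    (B := fun t => (q + 1) * ‖y‖ *
        (‖fderiv ℝ (f : V → ℂ) (x - t • y)‖ * ‖f (x - t • y)‖ ^ q)) zero_le_one
    (fun t _ => (hD t).continuousAt.continuousWithinAt)
    (fun t _ => (hD t).differentiableAt.differentiableWithinAt)
    (.of_forall fun t _ => ?_) ?_
  · simpa [norm_sub_rev] using h
  · rw [(hD t).deriv]
    refine (hDle t).trans ?_
    have h1 : ‖fderiv ℝ (f : V → ℂ) (x - t • y) (-y)‖ ≤
        ‖fderiv ℝ (f : V → ℂ) (x - t • y)‖ * ‖y‖ := by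
      simpa using (fderiv ℝ (f : V → ℂ) (x - t • y)).le_opNorm (-y)
    calc _ ≤ (q + 1) * ‖f (x - t • y)‖ ^ q * (‖fderiv ℝ (f : V → ℂ) (x - t • y)‖ * ‖y‖) := by
          gcongr
      _ = _ := by ring
  · have := (f.smooth 1).continuous_fderiv one_ne_zero
    have h2 := f.continuous
    refine Continuous.intervalIntegrable ?_ _ _
    have h3 : Continuous fun t : ℝ => ‖f (x - t • y)‖ ^ q :=
      Continuous.rpow_const (by fun_prop) fun _ => Or.inr hq
    fun_prop

lemma integrable_conjPow (f : 𝓢(V, ℂ)) {q : ℝ} (hq : 0 ≤ q) :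
    Integrable (fun x => conjPow q (f x)) := by
  refine (integrable_norm_rpow f (by linarith : 1 ≤ q + 1)).mono'
    ((continuous_conjPow hq).comp f.continuous).aestronglyMeasurable (.of_forall fun x => ?_)
  rw [norm_conjPow hq]

/-- The quantitative core: the pairing of `f` with a difference of translates of `conjPow q ∘ f`
is controlled by the Dirichlet term, up to a small multiple of `∫ |f|^(q+2)` when `K` is large. -/
lemma norm_integral_translate_le (f : 𝓢(V, ℂ)) {q K : ℝ} (hq : 0 ≤ q) (hK : 0 < K) (y : V) :
    ‖∫ x, (conjPow q (f x) - conjPow q (f (x - y))) * f x‖ ≤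
      (q + 1) * ‖y‖ * (K * (∫ x, ‖fderiv ℝ (f : V → ℂ) x‖ ^ 2 * ‖f x‖ ^ q) +
        (2 * K)⁻¹ * ∫ x, ‖f x‖ ^ (q + 2)) := by
  have hP := integrable_norm_rpow f (by linarith : 1 ≤ q + 2)
  have hG := integrable_dirichlet f hq
  have hcq : ∀ r : ℝ, 0 ≤ r → Continuous fun x => ‖f x‖ ^ r := fun r hr =>
    f.continuous.norm.rpow_const fun _ => Or.inr hr
  have hc1 := hcq q hq
  have hc2 := hcq (q + 2) (by linarith)
  have hcd := (f.smooth 1).continuous_fderiv one_ne_zero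
  let h : V → ℝ := fun x => K * (‖fderiv ℝ (f : V → ℂ) x‖ ^ 2 * ‖f x‖ ^ q) +
    (4 * K)⁻¹ * ‖f x‖ ^ (q + 2)
  have hhc : Continuous h := by fun_prop
  have hhi : Integrable h := (hG.const_mul K).add (hP.const_mul _)
  have hint : Integrable fun x => ∫ t in (0 : ℝ)..1, h (x - t • y) := by
    simp only [intervalIntegral.integral_of_le zero_le_one]
    exact (integrable_comp_sub_smul hhc hhi y).integral_prod_left
  -- Young's inequality is applied under the integral over the segment.
  have hbound : ∀ x, ‖(conjPow q (f x) - conjPow q (f (x - y))) * f x‖ ≤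
      (q + 1) * ‖y‖ * ((∫ t in (0 : ℝ)..1, h (x - t • y)) + (4 * K)⁻¹ * ‖f x‖ ^ (q + 2)) := by
    intro x
    rw [norm_mul]
    refine (mul_le_mul_of_nonneg_right (norm_conjPow_sub_le f hq x y) (norm_nonneg _)).trans ?_
    rw [intervalIntegral.integral_const_mul, mul_assoc]
    refine mul_le_mul_of_nonneg_left ?_ (by positivity)
    have hce : (∫ t in (0 : ℝ)..1, h (x - t • y)) + (4 * K)⁻¹ * ‖f x‖ ^ (q + 2) =
        ∫ t in (0 : ℝ)..1, (h (x - t • y) + (4 * K)⁻¹ * ‖f x‖ ^ (q + 2)) := by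
      rw [intervalIntegral.integral_add (Continuous.intervalIntegrable (by fun_prop) _ _)
        intervalIntegrable_const]
      simp
    rw [hce, ← intervalIntegral.integral_mul_const]
    refine intervalIntegral.integral_mono zero_le_one
      (Continuous.intervalIntegrable (by fun_prop) _ _)
      (Continuous.intervalIntegrable (by fun_prop) _ _) fun t => ?_
    have := young (g := ‖fderiv ℝ (f : V → ℂ) (x - t • y)‖) hq hK (norm_nonneg (f x))
      (norm_nonneg (f (x - t • y)))
    simp only [h]
    linarith
  refine (norm_integral_le_of_norm_le ((hint.add (hP.const_mul _)).const_mul _)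
    (.of_forall hbound)).trans (le_of_eq ?_)
  rw [integral_const_mul]
  simp only [Pi.add_apply]
  rw [integral_add hint (hP.const_mul _),
    integral_comp_sub_smul hhc hhi, integral_add (hG.const_mul K) (hP.const_mul _)]
  simp only [integral_const_mul]
  field_simp
  ring

/-! ### The reproducing identity and the inequality -/

/-- Reproducing identity for `∫ |f|^(q+2)`, obtained by subtracting the vanishing correlation of `f`
with `φ` and moving the translation from `f` to `conjPow q ∘ f`. -/
lemma integral_rpow_eq {φ f : 𝓢(V, ℂ)} {q : ℝ} (hq : 0 ≤ q) (hφ : ∫ y, φ y = 1)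
    (hf : ∀ x, ∫ y, φ y * f (x + y) = 0) :
    ((∫ x, ‖f x‖ ^ (q + 2) : ℝ) : ℂ) =
      ∫ y, φ y * ∫ x, (conjPow q (f x) - conjPow q (f (x - y))) * f x := by
  have hF := integrable_conjPow f hq
  have hFc : Continuous fun x => conjPow q (f x) := (continuous_conjPow hq).comp f.continuous
  have hfc := f.continuous
  have hφc := φ.continuous
  obtain ⟨C, hC⟩ : ∃ C, ∀ x, ‖f x‖ ≤ C :=
    ⟨_, fun x => f.toBoundedContinuousFunction.norm_coe_le_norm x⟩
  have hprod : Integrable (fun z : V × V => φ z.2 * (conjPow q (f z.1) * f (z.1 + z.2)))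
      (volume.prod volume) := by
    have h := (hF.mul_prod (φ.integrable (μ := volume))).mul_bdd (c := C) (g := fun z : V × V => f (z.1 + z.2))
      (Continuous.aestronglyMeasurable (by fun_prop)) (.of_forall fun z => hC _)
    refine h.congr (.of_forall fun z => ?_)
    simp only; ring
  have hzero : ∫ y, φ y * ∫ x, conjPow q (f x) * f (x + y) = 0 := by
    simp only [← integral_const_mul]
    rw [← integral_integral_swap (f := fun x y => φ y * (conjPow q (f x) * f (x + y))) hprod]
    rw [← integral_zero V ℂ]
    congr 1 with x
    rw [← mul_zero (conjPow q (f x)), ← hf x, ← integral_const_mul]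
    congr 1 with y
    ring
  have hzi : Integrable fun y => φ y * ∫ x, conjPow q (f x) * f (x + y) := by
    simpa only [← integral_const_mul] using hprod.integral_prod_right
  have hI : ∀ y, ∫ x, (conjPow q (f x) - conjPow q (f (x - y))) * f x =
      ((∫ x, ‖f x‖ ^ (q + 2) : ℝ) : ℂ) - ∫ x, conjPow q (f x) * f (x + y) := by
    intro y
    have h1 : ∀ w, Integrable fun x => conjPow q (f (x - w)) * f x := fun w =>
      (hF.comp_sub_right w).mul_bdd hfc.aestronglyMeasurable (.of_forall hC)
    have h2 := h1 0
    simp only [sub_zero] at h2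
    have h3 := integral_sub_right_eq_self (μ := volume)
      (fun x => conjPow q (f x) * f (x + y)) y
    simp only [sub_add_cancel] at h3
    simp only [sub_mul]
    rw [integral_sub h2 (h1 y), h3]
    simp only [conjPow_mul_self hq]
    rw [integral_complex_ofReal]
  simp only [hI, mul_sub]
  rw [integral_sub (φ.integrable.mul_const _) hzi, hzero, integral_mul_const, hφ]
  simp

end

/-- Planchon's Poincaré-type inequality: for Schwartz `f` with Fourier
support outside the unit ball and `p ≥ 2`,
`∫ |f|^p ≤ C_p ∫ |∇f|^2 |f|^{p-2}`. -/
theorem planchon_poincare (d : ℕ) (p : ℝ) (hp : 2 ≤ p) :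
    ∃ C > (0 : ℝ), ∀ f : 𝓢(EuclideanSpace ℝ (Fin d), ℂ),
      Function.support (𝓕 (f : EuclideanSpace ℝ (Fin d) → ℂ)) ⊆
        {ξ : EuclideanSpace ℝ (Fin d) | 1 ≤ ‖ξ‖} →
      ∫ x, ‖f x‖ ^ p ≤
        C * ∫ x, ‖fderiv ℝ (f : EuclideanSpace ℝ (Fin d) → ℂ) x‖ ^ (2 : ℕ) *
          ‖f x‖ ^ (p - 2) := by
  obtain ⟨φ, hφ1, hφ⟩ := exists_kernel (V := EuclideanSpace ℝ (Fin d))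
  obtain ⟨q, hq, rfl⟩ : ∃ q : ℝ, 0 ≤ q ∧ p = q + 2 := ⟨p - 2, by linarith, by ring⟩
  have hMi : Integrable fun y => ‖y‖ * ‖φ y‖ := by simpa using φ.integrable_pow_mul volume 1
  set M : ℝ := ∫ y, ‖y‖ * ‖φ y‖ with hM
  have hM0 : 0 ≤ M := integral_nonneg fun y => by positivity
  -- The summand `1` keeps `K` positive, and `K ≥ M (q + 1)` leaves at most `P / 2` to absorb.
  set K : ℝ := M * (q + 1) + 1 with hK
  have hK0 : 0 < K := by positivity
  refine ⟨2 * K ^ 2, by positivity, fun f hf => ?_⟩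
  rw [add_sub_cancel_right]
  have hid := integral_rpow_eq hq hφ1 (hφ f hf)
  set P := ∫ x, ‖f x‖ ^ (q + 2) with hP
  set G := ∫ x, ‖fderiv ℝ (f : EuclideanSpace ℝ (Fin d) → ℂ) x‖ ^ 2 * ‖f x‖ ^ q with hG
  have hP0 : 0 ≤ P := integral_nonneg fun x => by positivity
  have hG0 : 0 ≤ G := integral_nonneg fun x => by positivity
  have hle : P ≤ M * ((q + 1) * (K * G + (2 * K)⁻¹ * P)) := by
    calc P = ‖(P : ℂ)‖ := by rw [Complex.norm_real, Real.norm_of_nonneg hP0]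
      _ ≤ ∫ y, ‖y‖ * ‖φ y‖ * ((q + 1) * (K * G + (2 * K)⁻¹ * P)) := by
        rw [hid]
        refine norm_integral_le_of_norm_le (hMi.mul_const _) (.of_forall fun y => ?_)
        rw [norm_mul]
        refine (mul_le_mul_of_nonneg_left (norm_integral_translate_le f hq hK0 y)
          (norm_nonneg _)).trans (le_of_eq ?_)
        ring
      _ = _ := by rw [integral_mul_const]
  have hS : 0 ≤ K * G + (2 * K)⁻¹ * P := by positivity
  have h2 : P ≤ K * (K * G + (2 * K)⁻¹ * P) := by
    refine hle.trans ?_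
    rw [← mul_assoc]
    exact mul_le_mul_of_nonneg_right (by linarith) hS
  have h3 : K * (K * G + (2 * K)⁻¹ * P) = K ^ 2 * G + P / 2 := by
    field_simp
  linarith
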